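/- (Lemma 3, mean-squared error of the over-the-air aggregated gradient.) In the single-round over-the-air aggregation model, E[‖v/(m_h·N) − g‖²] ≤ σ̄²/(m_h²·N²) + σ_h²·V²/(M·N·m_h²) + ((M·(σ_h² − m_h²) − σ_h²)/(M·N·m_h²))·‖g‖². -/

import Mathlib

open MeasureTheory ProbabilityTheory

/-- The family `{h_i}_i ∪ {X_{i,m}}_{i,m} ∪ {n}` combined into a single family of random
variables with common codomain `ℝ × ℝ^d`; each member generates exactly the σ-algebra of the
corresponding original random variable, so mutual independence of this family is equivalent to
mutual independence of the original family. -/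
def otaFam {d N M : ℕ} {Ω : Type*}
    (h : Fin N → Ω → ℝ) (X : Fin N → Fin M → Ω → EuclideanSpace ℝ (Fin d))
    (n : Ω → EuclideanSpace ℝ (Fin d)) :
    Fin N ⊕ (Fin N × Fin M) ⊕ Unit → Ω → ℝ × EuclideanSpace ℝ (Fin d)
  | Sum.inl i => fun ω => (h i ω, 0)
  | Sum.inr (Sum.inl (i, m)) => fun ω => (0, X i m ω)
  | Sum.inr (Sum.inr _) => fun ω => (0, n ω)

/-!
The normalised signal `v / (m_h N)` is an unbiased estimator of `g`, so its mean-squared error is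
its total variance. By pairwise independence the total variance of `v` is the sum of those of the
noise and of the faded batch means `h_i A_i`. For independent `h` and `A`,
`Var (h A) = E[h²] Var A + Var h ‖E A‖²`, and averaging divides the total variance of a single
sample, at most `V² - ‖g‖²`, by the batch size `M`.
-/

section TotalVariance

variable {Ω : Type*} [MeasurableSpace Ω] {μ : Measure Ω} {E : Type*} [NormedAddCommGroup E]

/-- The total variance `E[‖Y - E[Y]‖²]` of a random vector, that is, the trace of its covariance
operator. As for `ProbabilityTheory.variance` on `ℝ`, it is meaningful for square-integrable `Y`;
otherwise the integrals may take the junk value `0`. -/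
noncomputable def totalVariance [NormedSpace ℝ E] (Y : Ω → E) (μ : Measure Ω) : ℝ :=
  ∫ ω, ‖Y ω - ∫ ω', Y ω' ∂μ‖ ^ 2 ∂μ

lemma totalVariance_const_smul [NormedSpace ℝ E] (c : ℝ) (Y : Ω → E) :
    totalVariance (fun ω => c • Y ω) μ = c ^ 2 * totalVariance Y μ := by
  simp only [totalVariance, integral_smul, ← smul_sub, norm_smul, mul_pow, Real.norm_eq_abs,
    sq_abs, integral_const_mul]

lemma integral_norm_sq_one_div_smul_sub [NormedSpace ℝ E] {c : ℝ} (hc : c ≠ 0) {Y : Ω → E} {g : E}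
    (hY : ∫ ω, Y ω ∂μ = c • g) :
    ∫ ω, ‖(1 / c) • Y ω - g‖ ^ 2 ∂μ = (1 / c) ^ 2 * totalVariance Y μ := by
  have hmean : ∫ ω, (1 / c) • Y ω ∂μ = g := by
    rw [integral_smul, hY, smul_smul, one_div_mul_cancel hc, one_smul]
  rw [← totalVariance_const_smul, totalVariance, hmean]

lemma memLp_two_smul_of_indepFun [NormedSpace ℝ E] [MeasurableSpace E] [OpensMeasurableSpace E]
    {a : Ω → ℝ} {Y : Ω → E} (ha : MemLp a 2 μ) (hY : MemLp Y 2 μ) (haY : IndepFun a Y μ) :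
    MemLp (fun ω => a ω • Y ω) 2 μ := by
  have hsq : IndepFun (fun ω => ‖a ω‖ ^ 2) (fun ω => ‖Y ω‖ ^ 2) μ :=
    haY.comp (measurable_norm.pow_const 2) (measurable_norm.pow_const 2)
  refine (memLp_two_iff_integrable_sq_norm (ha.1.smul hY.1)).2 ?_
  simpa only [Pi.smul_apply', norm_smul, mul_pow, Pi.mul_def] using
    hsq.integrable_mul (ha.integrable_norm_pow two_ne_zero) (hY.integrable_norm_pow two_ne_zero)

lemma integral_norm_sq_smul_of_indepFun [NormedSpace ℝ E] [MeasurableSpace E]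
    [OpensMeasurableSpace E] {a : Ω → ℝ} {Y : Ω → E} (ha : AEStronglyMeasurable a μ)
    (hY : AEStronglyMeasurable Y μ) (haY : IndepFun a Y μ) :
    ∫ ω, ‖a ω • Y ω‖ ^ 2 ∂μ = (∫ ω, a ω ^ 2 ∂μ) * ∫ ω, ‖Y ω‖ ^ 2 ∂μ := by
  have hsq : IndepFun (fun ω => a ω ^ 2) (fun ω => ‖Y ω‖ ^ 2) μ :=
    haY.comp (measurable_id.pow_const 2) (measurable_norm.pow_const 2)
  simpa only [norm_smul, mul_pow, Real.norm_eq_abs, sq_abs] using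
    hsq.integral_fun_mul_eq_mul_integral (ha.pow 2) (hY.norm.pow 2)

variable [InnerProductSpace ℝ E]

lemma integrable_inner_of_memLp_two {Y Z : Ω → E} (hY : MemLp Y 2 μ) (hZ : MemLp Z 2 μ) :
    Integrable (fun ω => inner ℝ (Y ω) (Z ω)) μ :=
  (hY.norm.integrable_mul hZ.norm).mono' (hY.1.inner hZ.1) <|
    ae_of_all μ fun ω => norm_inner_le_norm (Y ω) (Z ω)

lemma integral_norm_sq_sum_of_pairwise_orthogonal {ι : Type*} {s : Finset ι} {Y : ι → Ω → E}
    (hY : ∀ i ∈ s, MemLp (Y i) 2 μ)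
    (horth : (s : Set ι).Pairwise fun i j => ∫ ω, inner ℝ (Y i ω) (Y j ω) ∂μ = 0) :
    ∫ ω, ‖∑ i ∈ s, Y i ω‖ ^ 2 ∂μ = ∑ i ∈ s, ∫ ω, ‖Y i ω‖ ^ 2 ∂μ := by
  have hint : ∀ i ∈ s, ∀ j ∈ s, Integrable (fun ω => inner ℝ (Y i ω) (Y j ω)) μ :=
    fun i hi j hj => integrable_inner_of_memLp_two (hY i hi) (hY j hj)
  simp only [← real_inner_self_eq_norm_sq, sum_inner, inner_sum]
  rw [integral_finsetSum s fun j hj => integrable_finsetSum s fun i hi => hint i hi j hj]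
  refine Finset.sum_congr rfl fun j hj => ?_
  rw [integral_finsetSum s fun i hi => hint i hi j hj]
  exact Finset.sum_eq_single_of_mem j hj fun i hi hij => horth hi hj hij

variable [IsProbabilityMeasure μ] [CompleteSpace E]

lemma totalVariance_eq_sub {Y : Ω → E} (hY : MemLp Y 2 μ) :
    totalVariance Y μ = ∫ ω, ‖Y ω‖ ^ 2 ∂μ - ‖∫ ω, Y ω ∂μ‖ ^ 2 := by
  have hYint : Integrable Y μ := hY.integrable one_le_two
  have hsq : Integrable (fun ω => ‖Y ω‖ ^ 2) μ := hY.integrable_norm_pow two_ne_zero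
  have hcross : Integrable (fun ω => 2 * inner ℝ (∫ ω', Y ω' ∂μ) (Y ω)) μ :=
    (hYint.const_inner _).const_mul 2
  have hdiff : Integrable (fun ω => ‖Y ω‖ ^ 2 - 2 * inner ℝ (∫ ω', Y ω' ∂μ) (Y ω)) μ :=
    hsq.sub hcross
  calc totalVariance Y μ
      = ∫ ω, (‖Y ω‖ ^ 2 - 2 * inner ℝ (∫ ω', Y ω' ∂μ) (Y ω) + ‖∫ ω', Y ω' ∂μ‖ ^ 2) ∂μ := by
        simp only [totalVariance, norm_sub_sq_real, real_inner_comm]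
    _ = ∫ ω, ‖Y ω‖ ^ 2 ∂μ - 2 * ‖∫ ω, Y ω ∂μ‖ ^ 2 + ‖∫ ω, Y ω ∂μ‖ ^ 2 := by
        rw [integral_add hdiff (integrable_const _), integral_sub hsq hcross, integral_const_mul,
          integral_inner hYint, real_inner_self_eq_norm_sq, integral_const, probReal_univ,
          one_smul]
    _ = ∫ ω, ‖Y ω‖ ^ 2 ∂μ - ‖∫ ω, Y ω ∂μ‖ ^ 2 := by ring

variable [MeasurableSpace E] [BorelSpace E]

lemma integral_inner_centered_eq_zero_of_indepFun {Y Z : Ω → E} (hY : Integrable Y μ)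
    (hZ : Integrable Z μ) (hYZ : IndepFun Y Z μ) :
    ∫ ω, inner ℝ (Y ω - ∫ ω', Y ω' ∂μ) (Z ω - ∫ ω', Z ω' ∂μ) ∂μ = 0 := by
  have hcentered : IndepFun (fun ω => Y ω - ∫ ω', Y ω' ∂μ) (fun ω => Z ω - ∫ ω', Z ω' ∂μ) μ :=
    hYZ.comp (measurable_id.sub_const _) (measurable_id.sub_const _)
  have hmean : ∫ ω, (Y ω - ∫ ω', Y ω' ∂μ) ∂μ = 0 := by
    rw [integral_sub hY (integrable_const _), integral_const, probReal_univ, one_smul, sub_self]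
  refine (hcentered.integral_bilin (hY.sub (integrable_const _)) (hZ.sub (integrable_const _))
    (innerSL ℝ)).trans ?_
  rw [hmean, map_zero, zero_apply]

lemma totalVariance_sum_of_pairwise_indepFun {ι : Type*} {s : Finset ι} {Y : ι → Ω → E}
    (hY : ∀ i ∈ s, MemLp (Y i) 2 μ)
    (hind : (s : Set ι).Pairwise fun i j => IndepFun (Y i) (Y j) μ) :
    totalVariance (fun ω => ∑ i ∈ s, Y i ω) μ = ∑ i ∈ s, totalVariance (Y i) μ := by
  have hint : ∀ i ∈ s, Integrable (Y i) μ := fun i hi => (hY i hi).integrable one_le_two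
  simp only [totalVariance, integral_finsetSum s hint, ← Finset.sum_sub_distrib]
  exact integral_norm_sq_sum_of_pairwise_orthogonal
    (fun i hi => (hY i hi).sub (memLp_const _))
    fun i hi j hj hij => integral_inner_centered_eq_zero_of_indepFun (hint i hi) (hint j hj)
      (hind hi hj hij)

lemma totalVariance_sum_add_of_pairwise_indepFun {ι : Type*} [Fintype ι] {Y : ι → Ω → E}
    {Z : Ω → E} (hY : ∀ i, MemLp (Y i) 2 μ) (hZ : MemLp Z 2 μ)
    (hYY : Pairwise fun i j => IndepFun (Y i) (Y j) μ) (hYZ : ∀ i, IndepFun (Y i) Z μ) :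
    totalVariance (fun ω => ∑ i, Y i ω + Z ω) μ =
      ∑ i, totalVariance (Y i) μ + totalVariance Z μ := by
  let W : Option ι → Ω → E := fun k => k.elim Z Y
  have hW : ∀ k, MemLp (W k) 2 μ := Option.rec hZ hY
  have hWW : Pairwise fun k l => IndepFun (W k) (W l) μ := by
    rintro (_ | i) (_ | j) hkl
    · exact absurd rfl hkl
    · exact (hYZ j).symm
    · exact hYZ i
    · exact hYY (ne_of_apply_ne some hkl)
  simpa only [Fintype.sum_option, W, Option.elim_none, Option.elim_some, add_comm] using
    totalVariance_sum_of_pairwise_indepFun (s := Finset.univ) (fun k _ => hW k) (hWW.set_pairwise _)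

lemma totalVariance_smul_of_indepFun {a : Ω → ℝ} {Y : Ω → E} (ha : MemLp a 2 μ)
    (hY : MemLp Y 2 μ) (haY : IndepFun a Y μ) :
    totalVariance (fun ω => a ω • Y ω) μ =
      (∫ ω, a ω ^ 2 ∂μ) * totalVariance Y μ + variance a μ * ‖∫ ω, Y ω ∂μ‖ ^ 2 := by
  rw [totalVariance_eq_sub (memLp_two_smul_of_indepFun ha hY haY),
    integral_norm_sq_smul_of_indepFun ha.1 hY.1 haY,
    haY.integral_fun_smul_eq_smul_integral ha.1 hY.1, norm_smul, mul_pow, Real.norm_eq_abs, sq_abs,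
    totalVariance_eq_sub hY, variance_eq_sub ha]
  simp only [Pi.pow_apply]
  ring

end TotalVariance

section Aggregation

variable {Ω ι κ E : Type*}

/-- All the randomness of one agent, its channel gain and its batch, as a single random
variable. -/
def agentData (a : Ω → ℝ) (X : κ → Ω → E) (ω : Ω) : ℝ × (κ → E) :=
  (a ω, fun m => X m ω)

variable [Fintype ι] [Fintype κ] [NormedAddCommGroup E] [NormedSpace ℝ E]

/-- The average of the vectors `X m` over a batch; it is `0` for an empty batch. -/
noncomputable def batchMean (X : κ → Ω → E) (ω : Ω) : E :=
  (1 / (Fintype.card κ : ℝ)) • ∑ m, X m ω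

/-- The contribution of one agent to the received signal: its batch mean, scaled by the gain `a`
of its channel. -/
noncomputable def fadedBatchMean (a : Ω → ℝ) (X : κ → Ω → E) (ω : Ω) : E :=
  a ω • batchMean X ω

/-- The signal `v` received over the air: the superposition of the contributions of all agents,
plus the receiver noise `n`. -/
noncomputable def receivedSignal (h : ι → Ω → ℝ) (X : ι → κ → Ω → E) (n : Ω → E) (ω : Ω) : E :=
  ∑ i, fadedBatchMean (h i) (X i) ω + n ω

variable [MeasurableSpace Ω] {μ : Measure Ω}

lemma memLp_batchMean {p : ENNReal} {X : κ → Ω → E} (hX : ∀ m, MemLp (X m) p μ) :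
    MemLp (batchMean X) p μ :=
  (memLp_finsetSum Finset.univ fun m _ => hX m).const_smul _

lemma integrable_batchMean {X : κ → Ω → E} (hX : ∀ m, Integrable (X m) μ) :
    Integrable (batchMean X) μ :=
  (integrable_finsetSum Finset.univ fun m _ => hX m).smul _

lemma integral_batchMean [Nonempty κ] {X : κ → Ω → E} {g : E}
    (hX : ∀ m, Integrable (X m) μ) (hg : ∀ m, ∫ ω, X m ω ∂μ = g) :
    ∫ ω, batchMean X ω ∂μ = g := by
  simp only [batchMean]
  rw [integral_smul, integral_finsetSum _ fun m _ => hX m, Finset.sum_congr rfl fun m _ => hg m,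
    Finset.sum_const, Finset.card_univ, ← Nat.cast_smul_eq_nsmul ℝ, smul_smul,
    one_div_mul_cancel (Nat.cast_ne_zero.2 Fintype.card_ne_zero), one_smul]

variable [MeasurableSpace E] [BorelSpace E] [SecondCountableTopology E]

lemma indepFun_batchMean_right {β : Type*} [MeasurableSpace β] {Z : Ω → β} {X : κ → Ω → E}
    (hZX : IndepFun Z (fun ω m => X m ω) μ) : IndepFun Z (batchMean X) μ :=
  hZX.comp (ψ := fun x : κ → E => (1 / (Fintype.card κ : ℝ)) • ∑ m, x m) measurable_id
    (by fun_prop)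

lemma indepFun_fadedBatchMean_left {β : Type*} [MeasurableSpace β] {a : Ω → ℝ}
    {X : κ → Ω → E} {Z : Ω → β} (hXZ : IndepFun (agentData a X) Z μ) :
    IndepFun (fadedBatchMean a X) Z μ :=
  hXZ.comp (φ := fun p : ℝ × (κ → E) => p.1 • (1 / (Fintype.card κ : ℝ)) • ∑ m, p.2 m)
    (by fun_prop) measurable_id

lemma memLp_two_fadedBatchMean {a : Ω → ℝ} {X : κ → Ω → E} (ha : MemLp a 2 μ)
    (hX : ∀ m, MemLp (X m) 2 μ) (haX : IndepFun a (fun ω m => X m ω) μ) :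
    MemLp (fadedBatchMean a X) 2 μ :=
  memLp_two_smul_of_indepFun ha (memLp_batchMean hX) (indepFun_batchMean_right haX)

lemma integrable_fadedBatchMean {a : Ω → ℝ} {X : κ → Ω → E} (ha : Integrable a μ)
    (hX : ∀ m, Integrable (X m) μ) (haX : IndepFun a (fun ω m => X m ω) μ) :
    Integrable (fadedBatchMean a X) μ :=
  (indepFun_batchMean_right haX).integrable_smul ha (integrable_batchMean hX)

lemma integral_fadedBatchMean [Nonempty κ] {a : Ω → ℝ} {X : κ → Ω → E} {g : E}
    (ha : AEStronglyMeasurable a μ) (hX : ∀ m, Integrable (X m) μ)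
    (haX : IndepFun a (fun ω m => X m ω) μ) (hg : ∀ m, ∫ ω, X m ω ∂μ = g) :
    ∫ ω, fadedBatchMean a X ω ∂μ = (∫ ω, a ω ∂μ) • g := by
  rw [← integral_batchMean hX hg]
  exact (indepFun_batchMean_right haX).integral_fun_smul_eq_smul_integral ha
    (integrable_batchMean hX).1

lemma integral_receivedSignal [Nonempty κ] {h : ι → Ω → ℝ} {X : ι → κ → Ω → E} {n : Ω → E}
    {g : E} (hh : ∀ i, Integrable (h i) μ) (hX : ∀ i m, Integrable (X i m) μ)
    (hn : Integrable n μ) (hhX : ∀ i, IndepFun (h i) (fun ω m => X i m ω) μ)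
    (hEX : ∀ i m, ∫ ω, X i m ω ∂μ = g) :
    ∫ ω, receivedSignal h X n ω ∂μ = (∑ i, ∫ ω, h i ω ∂μ) • g + ∫ ω, n ω ∂μ := by
  have hint : ∀ i ∈ Finset.univ, Integrable (fadedBatchMean (h i) (X i)) μ :=
    fun i _ => integrable_fadedBatchMean (hh i) (hX i) (hhX i)
  simp only [receivedSignal]
  rw [integral_add (integrable_finsetSum _ hint) hn, integral_finsetSum _ hint, Finset.sum_smul]
  simp only [fun i => integral_fadedBatchMean (hh i).1 (hX i) (hhX i) (hEX i)]

end Aggregation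

section MeanSquaredError

variable {Ω ι κ E : Type*} [MeasurableSpace Ω] {μ : Measure Ω} [IsProbabilityMeasure μ]
  [Fintype ι] [Fintype κ] [NormedAddCommGroup E] [InnerProductSpace ℝ E] [CompleteSpace E]
  [MeasurableSpace E] [BorelSpace E]

lemma totalVariance_batchMean_le {X : κ → Ω → E} {C : ℝ} (hX : ∀ m, MemLp (X m) 2 μ)
    (hind : Pairwise fun m m' => IndepFun (X m) (X m') μ) (hC : ∀ m, totalVariance (X m) μ ≤ C) :
    totalVariance (batchMean X) μ ≤ C / Fintype.card κ := by
  have hsum : ∑ m, totalVariance (X m) μ ≤ Fintype.card κ * C := by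
    simpa only [Finset.card_univ, nsmul_eq_mul] using
      Finset.sum_le_card_nsmul Finset.univ _ C fun m _ => hC m
  calc totalVariance (batchMean X) μ
      = (1 / (Fintype.card κ : ℝ)) ^ 2 * totalVariance (fun ω => ∑ m, X m ω) μ :=
        totalVariance_const_smul _ _
    _ = (1 / (Fintype.card κ : ℝ)) ^ 2 * ∑ m, totalVariance (X m) μ := by
        rw [totalVariance_sum_of_pairwise_indepFun (fun m _ => hX m) (hind.set_pairwise _)]
    _ ≤ (1 / (Fintype.card κ : ℝ)) ^ 2 * (Fintype.card κ * C) := by gcongr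
    _ = C / Fintype.card κ := by
        rcases eq_or_ne (Fintype.card κ : ℝ) 0 with hcard | hcard
        · simp only [hcard, div_zero, zero_mul, mul_zero]
        · field_simp

variable [SecondCountableTopology E]

lemma totalVariance_fadedBatchMean_le [Nonempty κ] {a : Ω → ℝ} {X : κ → Ω → E} {g : E} {C : ℝ}
    (ha : MemLp a 2 μ) (hX : ∀ m, MemLp (X m) 2 μ) (haX : IndepFun a (fun ω m => X m ω) μ)
    (hind : Pairwise fun m m' => IndepFun (X m) (X m') μ) (hg : ∀ m, ∫ ω, X m ω ∂μ = g)
    (hC : ∀ m, totalVariance (X m) μ ≤ C) :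
    totalVariance (fadedBatchMean a X) μ ≤
      (∫ ω, a ω ^ 2 ∂μ) * (C / Fintype.card κ) + variance a μ * ‖g‖ ^ 2 := by
  have hsq : 0 ≤ ∫ ω, a ω ^ 2 ∂μ := integral_nonneg fun ω => sq_nonneg (a ω)
  calc totalVariance (fadedBatchMean a X) μ
      = (∫ ω, a ω ^ 2 ∂μ) * totalVariance (batchMean X) μ + variance a μ * ‖g‖ ^ 2 := by
        rw [← integral_batchMean (fun m => (hX m).integrable one_le_two) hg]
        exact totalVariance_smul_of_indepFun ha (memLp_batchMean hX) (indepFun_batchMean_right haX)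
    _ ≤ (∫ ω, a ω ^ 2 ∂μ) * (C / Fintype.card κ) + variance a μ * ‖g‖ ^ 2 :=
        add_le_add_left
          (mul_le_mul_of_nonneg_left (totalVariance_batchMean_le hX hind hC) hsq) _

lemma totalVariance_receivedSignal {h : ι → Ω → ℝ} {X : ι → κ → Ω → E} {n : Ω → E}
    (hh : ∀ i, MemLp (h i) 2 μ) (hX : ∀ i m, MemLp (X i m) 2 μ) (hn : MemLp n 2 μ)
    (hhX : ∀ i, IndepFun (h i) (fun ω m => X i m ω) μ)
    (hagents : Pairwise fun i j => IndepFun (agentData (h i) (X i)) (agentData (h j) (X j)) μ)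
    (hnoise : ∀ i, IndepFun (agentData (h i) (X i)) n μ) :
    totalVariance (receivedSignal h X n) μ =
      ∑ i, totalVariance (fadedBatchMean (h i) (X i)) μ + totalVariance n μ :=
  totalVariance_sum_add_of_pairwise_indepFun
    (fun i => memLp_two_fadedBatchMean (hh i) (hX i) (hhX i)) hn
    (fun _ _ hij => indepFun_fadedBatchMean_left
      (indepFun_fadedBatchMean_left (hagents hij).symm).symm)
    fun i => indepFun_fadedBatchMean_left (hnoise i)

lemma totalVariance_receivedSignal_le [Nonempty κ] {m_h σ_h2 C : ℝ} {h : ι → Ω → ℝ}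
    {X : ι → κ → Ω → E} {n : Ω → E} (hh : ∀ i, MemLp (h i) 2 μ)
    (hX : ∀ i m, MemLp (X i m) 2 μ) (hn : MemLp n 2 μ)
    (hhX : ∀ i, IndepFun (h i) (fun ω m => X i m ω) μ)
    (hbatch : ∀ i, Pairwise fun m m' => IndepFun (X i m) (X i m') μ)
    (hagents : Pairwise fun i j => IndepFun (agentData (h i) (X i)) (agentData (h j) (X j)) μ)
    (hnoise : ∀ i, IndepFun (agentData (h i) (X i)) n μ)
    (hEh : ∀ i, ∫ ω, h i ω ∂μ = m_h) (hEh2 : ∀ i, ∫ ω, h i ω ^ 2 ∂μ = σ_h2)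
    {g : E} (hEX : ∀ i m, ∫ ω, X i m ω ∂μ = g) (hC : ∀ i m, totalVariance (X i m) μ ≤ C) :
    totalVariance (receivedSignal h X n) μ ≤
      Fintype.card ι * (σ_h2 * (C / Fintype.card κ) + (σ_h2 - m_h ^ 2) * ‖g‖ ^ 2)
        + totalVariance n μ := by
  have hvar : ∀ i, variance (h i) μ = σ_h2 - m_h ^ 2 := fun i => by
    rw [variance_eq_sub (hh i), hEh, ← hEh2 i]
    rfl
  have hagent : ∀ i, totalVariance (fadedBatchMean (h i) (X i)) μ ≤
      σ_h2 * (C / Fintype.card κ) + (σ_h2 - m_h ^ 2) * ‖g‖ ^ 2 := fun i => by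
    rw [← hvar i, ← hEh2 i]
    exact totalVariance_fadedBatchMean_le (hh i) (hX i) (hhX i) (hbatch i) (hEX i) (hC i)
  rw [totalVariance_receivedSignal hh hX hn hhX hagents hnoise, ← nsmul_eq_mul]
  gcongr
  exact Finset.sum_le_card_nsmul Finset.univ _ _ fun i _ => hagent i

theorem overTheAir_mse_bound_general [Nonempty ι] [Nonempty κ] {m_h σ_h2 V σbar2 : ℝ}
    (hm : m_h ≠ 0) {h : ι → Ω → ℝ} {X : ι → κ → Ω → E} {n : Ω → E}
    (hh : ∀ i, MemLp (h i) 2 μ) (hX : ∀ i m, MemLp (X i m) 2 μ) (hn : MemLp n 2 μ)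
    (hhX : ∀ i, IndepFun (h i) (fun ω m => X i m ω) μ)
    (hbatch : ∀ i, Pairwise fun m m' => IndepFun (X i m) (X i m') μ)
    (hagents : Pairwise fun i j => IndepFun (agentData (h i) (X i)) (agentData (h j) (X j)) μ)
    (hnoise : ∀ i, IndepFun (agentData (h i) (X i)) n μ)
    (hEh : ∀ i, ∫ ω, h i ω ∂μ = m_h) (hEh2 : ∀ i, ∫ ω, h i ω ^ 2 ∂μ = σ_h2)
    {g : E} (hEX : ∀ i m, ∫ ω, X i m ω ∂μ = g) (hVX : ∀ i m, ∫ ω, ‖X i m ω‖ ^ 2 ∂μ ≤ V ^ 2)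
    (hEn : ∫ ω, n ω ∂μ = 0) (hVn : ∫ ω, ‖n ω‖ ^ 2 ∂μ ≤ σbar2) :
    ∫ ω, ‖(1 / (m_h * (Fintype.card ι : ℝ))) • receivedSignal h X n ω - g‖ ^ 2 ∂μ ≤
      σbar2 / (m_h ^ 2 * (Fintype.card ι : ℝ) ^ 2)
        + σ_h2 * V ^ 2 / ((Fintype.card κ : ℝ) * (Fintype.card ι : ℝ) * m_h ^ 2)
        + (((Fintype.card κ : ℝ) * (σ_h2 - m_h ^ 2) - σ_h2) /
            ((Fintype.card κ : ℝ) * (Fintype.card ι : ℝ) * m_h ^ 2)) * ‖g‖ ^ 2 := by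
  have hN : (Fintype.card ι : ℝ) ≠ 0 := Nat.cast_ne_zero.2 Fintype.card_ne_zero
  have hM : (Fintype.card κ : ℝ) ≠ 0 := Nat.cast_ne_zero.2 Fintype.card_ne_zero
  have hmean : ∫ ω, receivedSignal h X n ω ∂μ = (m_h * (Fintype.card ι : ℝ)) • g := by
    rw [integral_receivedSignal (fun i => (hh i).integrable one_le_two)
      (fun i m => (hX i m).integrable one_le_two) (hn.integrable one_le_two) hhX hEX, hEn, add_zero,
      Finset.sum_congr rfl fun i _ => hEh i, Finset.sum_const, Finset.card_univ, nsmul_eq_mul,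
      mul_comm]
  have hsample : ∀ i m, totalVariance (X i m) μ ≤ V ^ 2 - ‖g‖ ^ 2 := fun i m => by
    rw [totalVariance_eq_sub (hX i m), hEX]
    exact sub_le_sub_right (hVX i m) _
  have hnoise_var : totalVariance n μ ≤ σbar2 := by simpa only [totalVariance, hEn, sub_zero]
  calc ∫ ω, ‖(1 / (m_h * (Fintype.card ι : ℝ))) • receivedSignal h X n ω - g‖ ^ 2 ∂μ
      = (1 / (m_h * (Fintype.card ι : ℝ))) ^ 2 * totalVariance (receivedSignal h X n) μ :=
        integral_norm_sq_one_div_smul_sub (mul_ne_zero hm hN) hmean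
    _ ≤ (1 / (m_h * (Fintype.card ι : ℝ))) ^ 2 *
          (Fintype.card ι * (σ_h2 * ((V ^ 2 - ‖g‖ ^ 2) / Fintype.card κ)
            + (σ_h2 - m_h ^ 2) * ‖g‖ ^ 2) + σbar2) := by
        gcongr
        exact (totalVariance_receivedSignal_le hh hX hn hhX hbatch hagents hnoise hEh hEh2 hEX
          hsample).trans (add_le_add_right hnoise_var _)
    _ = _ := by
        field_simp
        ring

end MeanSquaredError

lemma indepFun_finset_of_notMem {Ω ι β : Type*} [MeasurableSpace Ω] [MeasurableSpace β]
    {μ : Measure Ω} {f : ι → Ω → β} (hf : iIndepFun f μ) (hmeas : ∀ i, AEMeasurable (f i) μ)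
    {k : ι} {T : Finset ι} (hk : k ∉ T) : IndepFun (f k) (fun ω (j : T) => f j ω) μ :=
  (hf.indepFun_finset₀ {k} T (Finset.disjoint_singleton_left.2 hk) hmeas).comp
    (measurable_pi_apply (⟨k, Finset.mem_singleton_self k⟩ : ({k} : Finset ι))) measurable_id

section OtaFam

variable {d N M : ℕ} {Ω : Type*} {h : Fin N → Ω → ℝ}
  {X : Fin N → Fin M → Ω → EuclideanSpace ℝ (Fin d)} {n : Ω → EuclideanSpace ℝ (Fin d)}

/-- The indices of the batch of agent `i` in the family `otaFam`. -/
def batchIndices (i : Fin N) : Finset (Fin N ⊕ (Fin N × Fin M) ⊕ Unit) :=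
  Finset.univ.image fun m => Sum.inr (Sum.inl (i, m))

/-- The indices of the channel gain and the batch of agent `i` in the family `otaFam`. -/
def agentIndices (i : Fin N) : Finset (Fin N ⊕ (Fin N × Fin M) ⊕ Unit) :=
  insert (Sum.inl i) (batchIndices i)

lemma inr_inl_mem_batchIndices (i : Fin N) (m : Fin M) :
    Sum.inr (Sum.inl (i, m)) ∈ batchIndices i :=
  Finset.mem_image_of_mem _ (Finset.mem_univ m)

lemma disjoint_agentIndices {i j : Fin N} (hij : i ≠ j) :
    Disjoint (agentIndices (M := M) i) (agentIndices j) := by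
  simp [agentIndices, batchIndices, Finset.disjoint_left, hij, hij.symm]

/-- The data of agent `i`, read off from the members of the family `otaFam` at `agentIndices i`. -/
def agentDataOfFam (i : Fin N) (z : agentIndices (M := M) i → ℝ × EuclideanSpace ℝ (Fin d)) :
    ℝ × (Fin M → EuclideanSpace ℝ (Fin d)) :=
  ((z ⟨_, Finset.mem_insert_self _ _⟩).1,
    fun m => (z ⟨_, Finset.mem_insert_of_mem (inr_inl_mem_batchIndices i m)⟩).2)

lemma measurable_agentDataOfFam (i : Fin N) :
    Measurable (agentDataOfFam (d := d) (M := M) i) := by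
  unfold agentDataOfFam
  fun_prop

variable [MeasurableSpace Ω] {μ : Measure Ω}

lemma aemeasurable_otaFam (hh : ∀ i, AEMeasurable (h i) μ) (hX : ∀ i m, AEMeasurable (X i m) μ)
    (hn : AEMeasurable n μ) : ∀ k, AEMeasurable (otaFam h X n k) μ
  | Sum.inl i => (hh i).prodMk aemeasurable_const
  | Sum.inr (Sum.inl (i, m)) => aemeasurable_const.prodMk (hX i m)
  | Sum.inr (Sum.inr _) => aemeasurable_const.prodMk hn

lemma pairwise_indepFun_batch_of_otaFam (hind : iIndepFun (otaFam h X n) μ) (i : Fin N) :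
    Pairwise fun m m' => IndepFun (X i m) (X i m') μ := fun m m' hm => by
  have hne : (Sum.inr (Sum.inl (i, m)) : Fin N ⊕ (Fin N × Fin M) ⊕ Unit) ≠
      Sum.inr (Sum.inl (i, m')) := by simpa using hm
  exact (hind.indepFun hne).comp measurable_snd measurable_snd

lemma indepFun_gain_batch_of_otaFam (hmeas : ∀ k, AEMeasurable (otaFam h X n k) μ)
    (hind : iIndepFun (otaFam h X n) μ) (i : Fin N) :
    IndepFun (h i) (fun ω m => X i m ω) μ := by
  have hi : Sum.inl i ∉ batchIndices (M := M) i := by simp [batchIndices]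
  exact (indepFun_finset_of_notMem hind hmeas hi).comp measurable_fst
    (ψ := fun z m => (z ⟨_, inr_inl_mem_batchIndices i m⟩).2) (by fun_prop)

lemma pairwise_indepFun_agentData_of_otaFam (hmeas : ∀ k, AEMeasurable (otaFam h X n k) μ)
    (hind : iIndepFun (otaFam h X n) μ) :
    Pairwise fun i j => IndepFun (agentData (h i) (X i)) (agentData (h j) (X j)) μ :=
  fun i j hij =>
    (hind.indepFun_finset₀ _ _ (disjoint_agentIndices hij) hmeas).comp
      (measurable_agentDataOfFam i) (measurable_agentDataOfFam j)

lemma indepFun_agentData_noise_of_otaFam (hmeas : ∀ k, AEMeasurable (otaFam h X n k) μ)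
    (hind : iIndepFun (otaFam h X n) μ) (i : Fin N) :
    IndepFun (agentData (h i) (X i)) n μ := by
  have hn : Sum.inr (Sum.inr ()) ∉ agentIndices (M := M) i := by simp [agentIndices, batchIndices]
  exact (indepFun_finset_of_notMem hind hmeas hn).symm.comp (measurable_agentDataOfFam i)
    measurable_snd

end OtaFam

/-- Lemma 3 of the paper: mean-squared error of the over-the-air aggregated
gradient.  In the single-round over-the-air aggregation model with received signal
`v = Σ_{i=1}^N h_i • ((1/M) Σ_{m=1}^M X_{i,m}) + n`,
`E[‖v/(m_h N) - g‖²] ≤ σ̄²/(m_h² N²) + σ_h² V²/(M N m_h²)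
  + ((M(σ_h² - m_h²) - σ_h²)/(M N m_h²)) ‖g‖²`. -/
theorem overTheAir_mse_bound
    {d : ℕ} (hd : 1 ≤ d) {N M : ℕ} (hN : 0 < N) (hM : 0 < M)
    {Ω : Type*} [MeasurableSpace Ω] (μ : Measure Ω) [IsProbabilityMeasure μ]
    (m_h σ_h2 V σbar2 : ℝ) (hm : 0 < m_h) (hσh : 0 ≤ σ_h2) (hV : 0 ≤ V)
    (hσbar : 0 ≤ σbar2)
    (h : Fin N → Ω → ℝ) (X : Fin N → Fin M → Ω → EuclideanSpace ℝ (Fin d))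
    (n : Ω → EuclideanSpace ℝ (Fin d))
    (hh2 : ∀ i, MemLp (h i) 2 μ) (hX2 : ∀ i m, MemLp (X i m) 2 μ)
    (hn2 : MemLp n 2 μ)
    (hind : iIndepFun (otaFam h X n) μ)
    (hEh : ∀ i, ∫ ω, h i ω ∂μ = m_h) (hEh2 : ∀ i, ∫ ω, (h i ω) ^ 2 ∂μ = σ_h2)
    (g : EuclideanSpace ℝ (Fin d))
    (hEX : ∀ i m, ∫ ω, X i m ω ∂μ = g)
    (hVX : ∀ i m, ∫ ω, ‖X i m ω‖ ^ 2 ∂μ ≤ V ^ 2)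
    (hEn : ∫ ω, n ω ∂μ = 0) (hVn : ∫ ω, ‖n ω‖ ^ 2 ∂μ ≤ σbar2)
    (v : Ω → EuclideanSpace ℝ (Fin d))
    (hv : v = fun ω =>
      (∑ i : Fin N, h i ω • ((1 / (M : ℝ)) • ∑ m : Fin M, X i m ω)) + n ω) :
    ∫ ω, ‖(1 / (m_h * (N : ℝ))) • v ω - g‖ ^ 2 ∂μ ≤
      σbar2 / (m_h ^ 2 * (N : ℝ) ^ 2)
        + σ_h2 * V ^ 2 / ((M : ℝ) * (N : ℝ) * m_h ^ 2)
        + (((M : ℝ) * (σ_h2 - m_h ^ 2) - σ_h2) / ((M : ℝ) * (N : ℝ) * m_h ^ 2))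
            * ‖g‖ ^ 2 := by
  have : Nonempty (Fin N) := Fin.pos_iff_nonempty.1 hN
  have : Nonempty (Fin M) := Fin.pos_iff_nonempty.1 hM
  have hmeas : ∀ k, AEMeasurable (otaFam h X n k) μ :=
    aemeasurable_otaFam (fun i => (hh2 i).aemeasurable) (fun i m => (hX2 i m).aemeasurable)
      hn2.aemeasurable
  subst hv
  simpa only [receivedSignal, fadedBatchMean, batchMean, Fintype.card_fin] using
    overTheAir_mse_bound_general hm.ne' hh2 hX2 hn2 (indepFun_gain_batch_of_otaFam hmeas hind)
      (pairwise_indepFun_batch_of_otaFam hind) (pairwise_indepFun_agentData_of_otaFam hmeas hind)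
      (indepFun_agentData_noise_of_otaFam hmeas hind) hEh hEh2 hEX hVX hEn hVn
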